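/- Let $P$ be an integrally closed integral polytope such that $K[P]$ is Gorenstein. Then there exists an integrally closed integral polytope $Q$ with $K[Q]$ Gorenstein such that the relative interior of $Q$ contains exactly one lattice point and the Ehrhart $h$-vectors satisfy $h(P) = h(Q)$. -/

import Mathlib

open scoped BigOperators

noncomputable section

/-- The canonical map `ℤⁿ → ℝⁿ`. -/
def toR {n : ℕ} (z : Fin n → ℤ) : Fin n → ℝ := fun i => (z i : ℝ)

/-- The monoid `E(P) = cone(P × {1}) ∩ ℤ^{n+1}` of a polytope `P ⊆ ℝⁿ`, encoded as pairs
`(z, k)` of a lattice point and its height. -/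
def EP {n : ℕ} (P : Set (Fin n → ℝ)) : Set ((Fin n → ℤ) × ℤ) :=
  {p | (0 < p.2 ∧ (fun i => (p.1 i : ℝ) / (p.2 : ℝ)) ∈ P) ∨ p = 0}

/-- The interior lattice points of the cone over `P`: `E(P) ∩ relint C(P)`. -/
def relintEP {n : ℕ} (P : Set (Fin n → ℝ)) : Set ((Fin n → ℤ) × ℤ) :=
  {p | 0 < p.2 ∧ (fun i => (p.1 i : ℝ) / (p.2 : ℝ)) ∈ intrinsicInterior ℝ P}

/-- `P` is integrally closed: every lattice point of `cP` is a sum of `c` lattice points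
of `P`. -/
def IntClosed {n : ℕ} (P : Set (Fin n → ℝ)) : Prop :=
  ∀ p ∈ EP P, ∀ c : ℕ, p.2 = (c : ℤ) → ∃ f : Fin c → (Fin n → ℤ),
    (∀ j, toR (f j) ∈ P) ∧ ∑ j, f j = p.1

/-- `K[P]` is Gorenstein: `relint E(P) = y + E(P)` for some `y` (Stanley–Danilov). -/
def GorensteinP {n : ℕ} (P : Set (Fin n → ℝ)) : Prop :=
  ∃ y ∈ relintEP P, relintEP P = (fun a => y + a) '' EP P

/-- The Ehrhart function of `P`. -/
def ehr {n : ℕ} (P : Set (Fin n → ℝ)) : ℕ → ℤ :=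
  fun m => if m = 0 then 1
    else (Set.ncard {z : Fin n → ℤ | (fun i => (z i : ℝ) / (m : ℝ)) ∈ P} : ℤ)

/-- The Ehrhart function of the relative interior of `P`. -/
def ehrInt {n : ℕ} (P : Set (Fin n → ℝ)) : ℕ → ℤ :=
  fun m => if m = 0 then 0
    else (Set.ncard {z : Fin n → ℤ |
      (fun i => (z i : ℝ) / (m : ℝ)) ∈ intrinsicInterior ℝ P} : ℤ)

/-- The Ehrhart series of `P`. -/
def ehrSeries {n : ℕ} (P : Set (Fin n → ℝ)) : PowerSeries ℤ := PowerSeries.mk (ehr P)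

/-- The dimension of a polytope `P`. -/
def pdim {n : ℕ} (P : Set (Fin n → ℝ)) : ℕ :=
  Module.finrank ℝ (affineSpan ℝ P).direction


/-! ### Relative interiors -/

theorem mem_relint_iff {E : Type*} [NormedAddCommGroup E] [NormedSpace ℝ E] (s : Set E) (x : E) :
    x ∈ intrinsicInterior ℝ s ↔ x ∈ affineSpan ℝ s ∧
      ∃ δ : ℝ, 0 < δ ∧ ∀ v ∈ affineSpan ℝ s, dist v x < δ → v ∈ s := by
  rw [mem_intrinsicInterior]
  constructor
  · rintro ⟨y, hy, rfl⟩
    refine ⟨y.2, ?_⟩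
    rw [mem_interior_iff_mem_nhds, Metric.mem_nhds_iff] at hy
    obtain ⟨δ, hδ, h⟩ := hy
    refine ⟨δ, hδ, fun v hv hd => ?_⟩
    exact @h ⟨v, hv⟩ (by simpa [Metric.mem_ball, Subtype.dist_eq] using hd)
  · rintro ⟨hx, δ, hδ, h⟩
    refine ⟨⟨x, hx⟩, ?_, rfl⟩
    rw [mem_interior_iff_mem_nhds, Metric.mem_nhds_iff]
    refine ⟨δ, hδ, fun v hv => ?_⟩
    exact h v.1 v.2 (by simpa [Metric.mem_ball, Subtype.dist_eq] using hv)

theorem relint_iff {E : Type*} [NormedAddCommGroup E] [NormedSpace ℝ E] [FiniteDimensional ℝ E]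
    (s : Set E) (hs : Convex ℝ s) (hne : s.Nonempty) (x : E) :
    x ∈ intrinsicInterior ℝ s ↔ x ∈ s ∧ ∀ p ∈ s, ∃ ε : ℝ, 0 < ε ∧ x + ε • (x - p) ∈ s := by
  constructor
  · intro hx
    refine ⟨intrinsicInterior_subset hx, fun p hp => ?_⟩
    rw [mem_relint_iff] at hx
    obtain ⟨hx, δ, hδ, h⟩ := hx
    have hn : 0 < ‖x - p‖ + 1 := by positivity
    refine ⟨δ / (‖x - p‖ + 1) , by positivity, ?_⟩
    apply h
    · have := AffineSubspace.smul_vsub_vadd_mem (affineSpan ℝ s) (δ / (‖x - p‖ + 1)) hx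
        (subset_affineSpan ℝ s hp) hx
      simpa [add_comm] using this
    · rw [dist_eq_norm, add_sub_cancel_left, norm_smul, Real.norm_of_nonneg (by positivity)]
      rw [div_mul_eq_mul_div, div_lt_iff₀ hn]
      nlinarith
  · rintro ⟨hx, h⟩
    obtain ⟨q, hq⟩ := hne.intrinsicInterior hs
    obtain ⟨ε, hε, hp⟩ := h q (intrinsicInterior_subset hq)
    rw [mem_relint_iff] at hq ⊢
    obtain ⟨hq, δ, hδ, H⟩ := hq
    have hxs := subset_affineSpan ℝ s hx
    refine ⟨hxs, δ * (ε / (1 + ε)), by positivity, fun v hv hd => ?_⟩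
    have hq' : ((1 + ε) / ε) • (v - x) + q ∈ s := by
      apply H
      · simpa using AffineSubspace.smul_vsub_vadd_mem (affineSpan ℝ s) ((1 + ε) / ε) hv hxs hq
      · rw [dist_eq_norm, add_sub_cancel_right, norm_smul, Real.norm_of_nonneg (by positivity),
          ← dist_eq_norm]
        calc (1 + ε) / ε * dist v x < (1 + ε) / ε * (δ * (ε / (1 + ε))) := by gcongr
          _ = δ := by field_simp
    have := hs hp hq' (a := 1 / (1 + ε)) (b := ε / (1 + ε)) (by positivity) (by positivity)
      (by field_simp)
    convert this using 1
    match_scalars <;> field_simp <;> ring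

/-! ### Abstract cones -/

structure IsCone {V : Type*} [AddCommGroup V] [Module ℝ V] (C : Set V) : Prop where
  zero : (0 : V) ∈ C
  add : ∀ {p q : V}, p ∈ C → q ∈ C → p + q ∈ C
  smul : ∀ {t : ℝ} {p : V}, 0 ≤ t → p ∈ C → t • p ∈ C

def Inn {V : Type*} [AddCommGroup V] [Module ℝ V] (C : Set V) (p : V) : Prop :=
  p ∈ C ∧ ∀ q ∈ C, ∃ ε : ℝ, 0 < ε ∧ p - ε • q ∈ C

theorem Inn.add {V : Type*} [AddCommGroup V] [Module ℝ V] {C : Set V} (hC : IsCone C) {p u : V}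
    (hp : Inn C p) (hu : u ∈ C) : Inn C (p + u) := by
  refine ⟨hC.add hp.1 hu, fun q hq => ?_⟩
  obtain ⟨ε, hε, h⟩ := hp.2 q hq
  refine ⟨ε, hε, ?_⟩
  have := hC.add h hu
  convert this using 1
  module

theorem Inn.smul {V : Type*} [AddCommGroup V] [Module ℝ V] {C : Set V} (hC : IsCone C) {p : V}
    {t : ℝ} (ht : 0 < t) (hp : Inn C p) : Inn C (t • p) := by
  refine ⟨hC.smul ht.le hp.1, fun q hq => ?_⟩
  obtain ⟨ε, hε, h⟩ := hp.2 q hq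
  refine ⟨t * ε, by positivity, ?_⟩
  have := hC.smul ht.le h
  convert this using 1
  module

/-- The data of a decomposed Gorenstein generator. -/
structure Setup {V G : Type*} [AddCommGroup V] [Module ℝ V] [AddCommGroup G]
    (C : Set V) (ι : G →+ V) (y1 y2 z : G) : Prop where
  cone : IsCone C
  gor : ∀ x : G, Inn C (ι x) ↔ ι (x - (y1 + y2 + z)) ∈ C
  h1 : ι y1 ∈ C
  h2 : ι y2 ∈ C
  hz : ι z ∈ C

section abstractSetup

variable {V G : Type*} [AddCommGroup V] [Module ℝ V] [AddCommGroup G]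
    {C : Set V} {ι : G →+ V} {y1 y2 z : G}

theorem Setup.inn (h : Setup C ι y1 y2 z) : Inn C (ι (y1 + y2 + z)) := by
  rw [h.gor, sub_self, map_zero]
  exact h.cone.zero

theorem Setup.inn' (h : Setup C ι y1 y2 z) {u : V} (hu : u ∈ C) {a b d : ℝ}
    (ha : 0 < a) (hb : 0 < b) (hd : 0 < d) : Inn C (u + a • ι y1 + b • ι y2 + d • ι z) := by
  obtain ⟨m, hm, hma, hmb, hmd⟩ : ∃ m : ℝ, 0 < m ∧ m ≤ a ∧ m ≤ b ∧ m ≤ d :=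
    ⟨min a (min b d), by positivity, by simp, by simp, by simp⟩
  have := (h.inn.smul h.cone hm).add h.cone (h.cone.add hu (h.cone.add
    (h.cone.smul (sub_nonneg.2 hma) h.h1) (h.cone.add
    (h.cone.smul (sub_nonneg.2 hmb) h.h2) (h.cone.smul (sub_nonneg.2 hmd) h.hz))))
  convert this using 1
  simp only [map_add]
  module

theorem Setup.key (h : Setup C ι y1 y2 z) {x : G} {N : ℝ} (hN : 0 < N) {u : V} (hu : u ∈ C)
    {a b d : ℝ} (ha : 0 < a) (hb : 0 < b) (hd : 0 < d)
    (he : N • (ι x + ι y1 + ι y2 + ι z) = u + a • ι y1 + b • ι y2 + d • ι z) : ι x ∈ C := by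
  have := (h.inn' hu ha hb hd).smul h.cone (inv_pos.2 hN)
  rw [← he, inv_smul_smul₀ hN.ne'] at this
  have h2 := (h.gor (x + (y1 + y2 + z))).1 (by
    convert this using 1
    simp only [map_add]; abel)
  simpa using h2

theorem Setup.round (h : Setup C ι y1 y2 z) {x : G} {r : ℝ}
    (hx : ι x + r • (ι y1 - ι y2) ∈ C) : ∃ k : ℤ, ι (x + k • (y1 - y2)) ∈ C := by
  refine ⟨⌈r⌉, h.key (N := 1) (a := 1 + (⌈r⌉ - r)) (b := 1 - (⌈r⌉ - r)) (d := 1) one_pos hx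
    ?_ ?_ one_pos ?_⟩
  · linarith [Int.le_ceil r]
  · linarith [Int.ceil_lt_add_one r]
  · simp only [map_add, map_sub, map_zsmul, ← Int.cast_smul_eq_zsmul ℝ]
    module

theorem Setup.round2 (h : Setup C ι y1 y2 z) {x : G} {r ε : ℝ} (hε : 0 < ε)
    (hx : ι x - ε • (ι y1 + ι y2 + ι z) + r • (ι y1 - ι y2) ∈ C) :
    ∃ k : ℤ, ι (x - y1 - z + k • (y1 - y2)) ∈ C := by
  refine ⟨⌈r⌉, h.key (N := 1) (a := ε + (⌈r⌉ - r)) (b := ε + (1 - (⌈r⌉ - r))) (d := ε) one_pos hx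
    ?_ ?_ hε ?_⟩
  · linarith [Int.le_ceil r]
  · linarith [Int.ceil_lt_add_one r]
  · simp only [map_add, map_sub, map_zsmul, ← Int.cast_smul_eq_zsmul ℝ]
    module

theorem Setup.uniq (h : Setup C ι y1 y2 z) {x : G} {k : ℤ} (hk : 1 ≤ k) (hx : ι x ∈ C)
    (hx' : ι (x + k • (y1 - y2)) ∈ C) : ι (x + k • (y1 - y2) - y1) ∈ C := by
  have hk' : (1 : ℝ) ≤ k := by exact_mod_cast hk
  have hk0 : (0 : ℝ) < k := by linarith
  refine h.key (N := k + 1) (a := k) (b := 1) (d := k + 1) (by linarith)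
    (h.cone.add (h.cone.smul hk0.le hx') hx) hk0 one_pos (by linarith) ?_
  simp only [map_add, map_sub, map_zsmul, ← Int.cast_smul_eq_zsmul ℝ]
  module

theorem Setup.strip (h : Setup C ι y1 y2 z) {u : G} (a : ℕ) (hu : ι u ∈ C)
    (hu' : ι (u + a • y2 - y1) ∈ C) : ι (u - y1) ∈ C := by
  have ha : (0 : ℝ) ≤ a := by positivity
  refine h.key (N := a + 1) (a := 1) (b := 1) (d := a + 1) (by linarith)
    (h.cone.add (h.cone.smul ha hu) hu') one_pos one_pos (by linarith) ?_
  simp only [map_add, map_sub, map_nsmul, ← Nat.cast_smul_eq_nsmul ℝ]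
  module

theorem Setup.ne (h : Setup C ι y1 y2 z) (he : y1 = y2) : ι (-y1) ∈ C := by
  subst he
  refine h.key (N := 2) (a := 1) (b := 1) (d := 2) two_pos h.cone.zero
     one_pos one_pos two_pos ?_
  simp only [map_neg]
  module

end abstractSetup

/-! ### The cone over a polytope -/

def CC {n : ℕ} (P : Set (Fin n → ℝ)) : Set ((Fin n → ℝ) × ℝ) :=
  {p | ∃ t : ℝ, 0 ≤ t ∧ ∃ v ∈ P, p = (t • v, t)}

def iot (n : ℕ) : ((Fin n → ℤ) × ℤ) →+ ((Fin n → ℝ) × ℝ) where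
  toFun p := (toR p.1, (p.2 : ℝ))
  map_zero' := by
    ext <;> simp [toR]
  map_add' p q := by
    ext <;> simp [toR]

theorem iot_apply {n : ℕ} (p : (Fin n → ℤ) × ℤ) : iot n p = (toR p.1, (p.2 : ℝ)) := rfl

theorem iot_inj {n : ℕ} {p q : (Fin n → ℤ) × ℤ} (h : iot n p = iot n q) : p = q := by
  rw [iot_apply, iot_apply, Prod.mk.injEq] at h
  ext i
  · have := congrFun h.1 i
    simpa [toR] using this
  · simpa using h.2

section cones

variable {n : ℕ} {P : Set (Fin n → ℝ)}

theorem CC_cone (hc : Convex ℝ P) (hne : P.Nonempty) : IsCone (CC P) where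
  zero := by
    obtain ⟨v, hv⟩ := hne
    exact ⟨0, le_rfl, v, hv, by ext <;> simp⟩
  add := by
    rintro _ _ ⟨t, ht, v, hv, rfl⟩ ⟨s, hs, u, hu, rfl⟩
    rcases (add_nonneg ht hs).eq_or_lt with h | h
    · have : t = 0 := by linarith
      have : s = 0 := by linarith
      subst_vars
      exact ⟨0, le_rfl, v, hv, by ext <;> simp⟩
    · refine ⟨t + s, h.le, (t / (t + s)) • v + (s / (t + s)) • u,
        hc hv hu (by positivity) (by positivity) (by field_simp), ?_⟩
      ext i
      · simp
        field_simp
      · simp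
  smul := by
    rintro c _ hc ⟨t, ht, v, hv, rfl⟩
    exact ⟨c * t, by positivity, v, hv, by simp [smul_smul]⟩

theorem CC_nonneg {p : (Fin n → ℝ) × ℝ} (hp : p ∈ CC P) : 0 ≤ p.2 := by
  obtain ⟨t, ht, v, hv, rfl⟩ := hp
  exact ht

theorem CC_zero {p : (Fin n → ℝ) × ℝ} (hp : p ∈ CC P) (h0 : p.2 = 0) : p = 0 := by
  obtain ⟨t, ht, v, hv, rfl⟩ := hp
  simp only at h0
  subst h0
  simp

theorem mem_CC_pos {v : Fin n → ℝ} {t : ℝ} (ht : 0 < t) : (v, t) ∈ CC P ↔ t⁻¹ • v ∈ P := by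
  constructor
  · rintro ⟨s, hs, u, hu, h⟩
    rw [Prod.mk.injEq] at h
    obtain ⟨rfl, rfl⟩ := h
    rwa [inv_smul_smul₀ ht.ne']
  · intro h
    exact ⟨t, ht.le, _, h, by rw [smul_inv_smul₀ ht.ne']⟩

theorem div_eq_smul (z : Fin n → ℤ) (k : ℝ) : (fun i => (z i : ℝ) / k) = k⁻¹ • toR z := by
  ext i
  simp [toR, div_eq_inv_mul]

theorem mem_EP (hne : P.Nonempty) (p : (Fin n → ℤ) × ℤ) : p ∈ EP P ↔ iot n p ∈ CC P := by
  unfold EP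
  rw [Set.mem_ofPred_eq, div_eq_smul]
  constructor
  · rintro (⟨h, hp⟩ | rfl)
    · rw [iot_apply, mem_CC_pos (by exact_mod_cast h)]
      exact hp
    · rw [map_zero]
      obtain ⟨v, hv⟩ := hne
      exact ⟨0, le_rfl, v, hv, by ext <;> simp⟩
  · intro h
    rcases (CC_nonneg h).eq_or_lt with h0 | h0
    · right
      apply iot_inj
      rw [map_zero]
      exact CC_zero h h0.symm
    · left
      rw [iot_apply] at h h0
      rw [mem_CC_pos h0] at h
      exact ⟨by simpa [iot_apply] using h0, h⟩

theorem inn_pos (hne : P.Nonempty) {p : (Fin n → ℝ) × ℝ} (hp : Inn (CC P) p) : 0 < p.2 := by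
  obtain ⟨v, hv⟩ := hne
  obtain ⟨ε, hε, h⟩ := hp.2 (v, 1) ⟨1, zero_le_one, v, hv, by simp⟩
  have := CC_nonneg h
  simp at this
  linarith

theorem inn_iff (hc : Convex ℝ P) (hne : P.Nonempty) (v : Fin n → ℝ) {t : ℝ} (ht : 0 < t) :
    Inn (CC P) (v, t) ↔ t⁻¹ • v ∈ intrinsicInterior ℝ P := by
  rw [relint_iff P hc hne]
  have hC := CC_cone hc hne
  constructor
  · rintro ⟨h1, h2⟩
    refine ⟨(mem_CC_pos ht).1 h1, fun p hp => ?_⟩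
    obtain ⟨ε, hε, h⟩ := h2 (t • p, t) ⟨t, ht.le, p, hp, rfl⟩
    -- shrink so that the height stays positive
    have h' : ((v, t) : (Fin n → ℝ) × ℝ) - (ε / (1 + ε)) • (t • p, t) ∈ CC P := by
      have := hC.add (hC.smul (t := 1 / (1 + ε)) (by positivity) h)
        (hC.smul (t := ε / (1 + ε)) (by positivity) h1)
      convert this using 1
      match_scalars <;> field_simp
    have he : ((v, t) : (Fin n → ℝ) × ℝ) - (ε / (1 + ε)) • (t • p, t)
        = (v - (ε / (1 + ε) * t) • p, t / (1 + ε)) := by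
      ext i
      · simp; ring
      · simp; field_simp; ring
    rw [he, mem_CC_pos (by positivity)] at h'
    refine ⟨ε, hε, ?_⟩
    convert h' using 1
    match_scalars <;> field_simp
  · rintro ⟨h1, h2⟩
    refine ⟨(mem_CC_pos ht).2 h1, ?_⟩
    rintro _ ⟨s, hs, p, hp, rfl⟩
    obtain ⟨ε, hε, h⟩ := h2 p hp
    refine ⟨t / (s + 1) * (ε / (1 + ε)), by positivity, ?_⟩
    have hp' : ((p, 1) : (Fin n → ℝ) × ℝ) ∈ CC P := ⟨1, zero_le_one, p, hp, by simp⟩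
    have h3 := hC.smul (t := t / (1 + ε)) (by positivity)
      (show ((t⁻¹ • v + ε • (t⁻¹ • v - p), 1) : (Fin n → ℝ) × ℝ) ∈ CC P from
        ⟨1, zero_le_one, _, h, by simp⟩)
    have h4 := hC.add h3 (hC.smul (t := t * (ε / (1 + ε)) * (1 / (s + 1))) (by positivity) hp')
    convert h4 using 1
    ext i
    · simp
      field_simp
      ring
    · simp
      field_simp
      ring

theorem mem_relintEP (hc : Convex ℝ P) (hne : P.Nonempty) (p : (Fin n → ℤ) × ℤ) :
    p ∈ relintEP P ↔ Inn (CC P) (iot n p) := by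
  unfold relintEP
  rw [Set.mem_ofPred_eq, div_eq_smul]
  constructor
  · rintro ⟨h, hp⟩
    exact (inn_iff hc hne _ (by exact_mod_cast h)).2 hp
  · intro h
    have h0 := inn_pos hne h
    exact ⟨by simpa [iot_apply] using h0, (inn_iff hc hne _ h0).1 h⟩

theorem gor_iff (hc : Convex ℝ P) (hne : P.Nonempty) (y : (Fin n → ℤ) × ℤ) :
    (y ∈ relintEP P ∧ relintEP P = (fun a => y + a) '' EP P) ↔
      ∀ x, Inn (CC P) (iot n x) ↔ iot n (x - y) ∈ CC P := by
  constructor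
  · rintro ⟨-, h⟩ x
    rw [← mem_relintEP hc hne, ← mem_EP hne, h]
    constructor
    · rintro ⟨a, ha, rfl⟩
      simpa using ha
    · intro hx
      exact ⟨_, hx, by simp⟩
  · intro h
    constructor
    · rw [mem_relintEP hc hne, h, sub_self, map_zero]
      exact (CC_cone hc hne).zero
    · ext x
      rw [mem_relintEP hc hne, h, ← mem_EP hne]
      constructor
      · intro hx
        exact ⟨_, hx, by simp⟩
      · rintro ⟨a, ha, rfl⟩
        simpa using ha

/-! ### Counting -/

def lev (P : Set (Fin n → ℝ)) (m : ℤ) : Set (Fin n → ℤ) := {z | iot n (z, m) ∈ CC P}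

theorem lev_zero (hne : P.Nonempty) : lev P 0 = {0} := by
  ext z
  constructor
  · intro h
    have := CC_zero h (by simp [iot_apply])
    have h2 : iot n (z, 0) = iot n 0 := by rw [this, map_zero]
    exact congrArg Prod.fst (iot_inj h2)
  · rintro rfl
    obtain ⟨v, hv⟩ := hne
    exact ⟨0, le_rfl, v, hv, by ext <;> simp [iot_apply, toR]⟩

theorem ehr_eq (hne : P.Nonempty) (m : ℕ) : ehr P m = ((lev P m).ncard : ℤ) := by
  unfold ehr
  split_ifs with h
  · subst h
    simp [lev_zero hne]
  · have hm : (0 : ℝ) < m := by positivity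
    congr 2
    ext z
    rw [Set.mem_ofPred_eq, div_eq_smul, ← mem_CC_pos hm]
    simp [lev, iot_apply]

theorem lev_finite (hb : Bornology.IsBounded P) (m : ℕ) : (lev P m).Finite := by
  obtain ⟨R, hR⟩ := hb.exists_norm_le
  refine (Set.finite_Icc (fun _ : Fin n => -⌈m * R⌉) (fun _ => ⌈m * R⌉)).subset ?_
  rintro z ⟨t, ht, v, hv, h⟩
  rw [iot_apply, Prod.mk.injEq] at h
  obtain ⟨h1, h2⟩ := h
  have h3 : ∀ i, |(z i : ℝ)| ≤ m * R := by
    intro i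
    have h4 : (z i : ℝ) = t * v i := by simpa [toR] using congrFun h1 i
    have h5 : |v i| ≤ R := by
      have := norm_le_pi_norm v i
      rw [Real.norm_eq_abs] at this
      exact this.trans (hR v hv)
    have h6 : t = m := by simpa using h2.symm
    rw [h4, abs_mul, abs_of_nonneg ht, h6]
    gcongr
  constructor <;> intro i
  · have := (abs_le.1 (h3 i)).1
    have h4 := Int.le_ceil (m * R)
    have : (-⌈m * R⌉ : ℝ) ≤ z i := by linarith
    exact_mod_cast this
  · have := (abs_le.1 (h3 i)).2
    have h4 := Int.le_ceil (m * R)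
    have : (z i : ℝ) ≤ ⌈m * R⌉ := by linarith
    exact_mod_cast this

end cones

/-! ### Projection along `y1 - y2` -/

structure Proj {V G : Type*} [AddCommGroup V] [Module ℝ V] [AddCommGroup G]
    (ι : G →+ V) (rV : V →ₗ[ℝ] V) (rG : G →+ G) (w : G) : Prop where
  inj : Function.Injective ι
  comm : ∀ x, ι (rG x) = rV (ι x)
  exV : ∀ p, ∃ μ : ℝ, rV p = p - μ • ι w
  exG : ∀ x, ∃ k : ℤ, rG x = x - k • w
  zero : rG w = 0

section abstractProj

variable {V G : Type*} [AddCommGroup V] [Module ℝ V] [AddCommGroup G]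
    {C : Set V} {ι : G →+ V} {y1 y2 z : G} {rV : V →ₗ[ℝ] V} {rG : G →+ G} {w : G}

theorem Proj.zeroV (h : Proj ι rV rG w) : rV (ι w) = 0 := by
  rw [← h.comm, h.zero, map_zero]

theorem Proj.idem (h : Proj ι rV rG w) (p : V) : rV (rV p) = rV p := by
  obtain ⟨μ, hμ⟩ := h.exV p
  conv_lhs => rw [hμ]
  rw [map_sub, map_smul, h.zeroV, smul_zero, sub_zero]

theorem Proj.fix (h : Proj ι rV rG w) {x : G} (hx : ι x ∈ rV '' C) : rG x = x := by
  obtain ⟨p, hp, he⟩ := hx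
  apply h.inj
  rw [h.comm, ← he, h.idem]

theorem Proj.cone (hC : IsCone C) : IsCone (rV '' C) where
  zero := ⟨0, hC.zero, map_zero _⟩
  add := by
    rintro _ _ ⟨p, hp, rfl⟩ ⟨q, hq, rfl⟩
    exact ⟨p + q, hC.add hp hq, map_add _ _ _⟩
  smul := by
    rintro t _ ht ⟨p, hp, rfl⟩
    exact ⟨t • p, hC.smul ht hp, map_smul _ _ _⟩

theorem Proj.mem_iff (h : Proj ι rV rG (y1 - y2)) (hs : Setup C ι y1 y2 z) (x : G) :
    ι x ∈ rV '' C ↔ ∃ e, ι e ∈ C ∧ rG e = x := by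
  constructor
  · intro hx
    have hfix := h.fix hx
    obtain ⟨p, hp, he⟩ := hx
    obtain ⟨μ, hμ⟩ := h.exV p
    have h1 : ι x + μ • (ι y1 - ι y2) ∈ C := by
      rw [← he, hμ, map_sub]
      simpa using hp
    obtain ⟨k, hk⟩ := hs.round h1
    refine ⟨_, hk, ?_⟩
    rw [map_add, map_zsmul, h.zero, smul_zero, add_zero, hfix]
  · rintro ⟨e, he, rfl⟩
    exact ⟨_, he, (h.comm e).symm⟩

theorem Proj.inn (rV : V →ₗ[ℝ] V) {p : V} (hp : Inn C p) : Inn (rV '' C) (rV p) := by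
  refine ⟨⟨p, hp.1, rfl⟩, ?_⟩
  rintro _ ⟨q, hq, rfl⟩
  obtain ⟨ε, hε, h⟩ := hp.2 q hq
  exact ⟨ε, hε, _, h, by simp⟩

theorem Proj.gor (h : Proj ι rV rG (y1 - y2)) (hs : Setup C ι y1 y2 z) (x : G) :
    Inn (rV '' C) (ι x) ↔ ι (x - rG (y1 + z)) ∈ rV '' C := by
  have hD : IsCone (rV '' C) := Proj.cone hs.cone
  constructor
  · intro hx
    have hfix := h.fix hx.1
    obtain ⟨ε, hε, p, hp, he⟩ := hx.2 (rV (ι (y1 + y2 + z))) ⟨_, hs.inn.1, rfl⟩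
    obtain ⟨μ, hμ⟩ := h.exV p
    obtain ⟨ν, hν⟩ := h.exV (ι (y1 + y2 + z))
    have h1 : ι x - ε • (ι y1 + ι y2 + ι z) + (μ + ε * ν) • (ι y1 - ι y2) ∈ C := by
      convert hp using 1
      have h2 : p = rV p + μ • ι (y1 - y2) := by rw [hμ]; simp
      rw [h2, he, hν]
      simp only [map_add, map_sub]
      module
    obtain ⟨k, hk⟩ := hs.round2 hε h1
    rw [h.mem_iff hs]
    refine ⟨_, hk, ?_⟩
    rw [map_add, map_zsmul, h.zero, smul_zero, add_zero, map_sub, map_sub, hfix, map_add]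
    abel
  · intro hx
    have h1 : Inn (rV '' C) (rV (ι (y1 + z))) := by
      have h2 := ((Proj.inn rV hs.inn).add hD ⟨_, hs.hz, rfl⟩).smul hD (t := 1 / 2) (by norm_num)
      convert h2 using 1
      have h3 : rV (ι y1) = rV (ι y2) := by
        have := h.zeroV
        rw [map_sub, map_sub, sub_eq_zero] at this
        exact this
      simp only [map_add, h3]
      module
    have h4 := h1.add hD hx
    rw [← h.comm, ← map_add] at h4
    simpa using h4

end abstractProj

/-! ### The concrete projection -/

def rhoZ {n : ℕ} (l w : Fin n → ℤ) : (Fin n → ℤ) →+ (Fin n → ℤ) where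
  toFun v := v - (∑ i, l i * v i) • w
  map_zero' := by simp
  map_add' u v := by
    simp only [Pi.add_apply, mul_add, Finset.sum_add_distrib, add_smul]
    abel

def rhoR {n : ℕ} (l w : Fin n → ℤ) : (Fin n → ℝ) →ₗ[ℝ] (Fin n → ℝ) where
  toFun v := v - (∑ i, (l i : ℝ) * v i) • toR w
  map_add' u v := by
    simp only [Pi.add_apply, mul_add, Finset.sum_add_distrib, add_smul]
    abel
  map_smul' t v := by
    have : ∑ i, (l i : ℝ) * (t • v) i = t * ∑ i, (l i : ℝ) * v i := by
      rw [Finset.mul_sum]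
      refine Finset.sum_congr rfl fun i _ => ?_
      simp only [Pi.smul_apply, smul_eq_mul]
      ring
    rw [this, RingHom.id_apply, smul_sub, smul_smul]

theorem rho_comm {n : ℕ} (l w v : Fin n → ℤ) : toR (rhoZ l w v) = rhoR l w (toR v) := by
  ext i
  simp [toR, rhoZ, rhoR]

def rG {n : ℕ} (l w : Fin n → ℤ) : ((Fin n → ℤ) × ℤ) →+ ((Fin n → ℤ) × ℤ) :=
  AddMonoidHom.prodMap (rhoZ l w) (AddMonoidHom.id ℤ)

def rV {n : ℕ} (l w : Fin n → ℤ) : ((Fin n → ℝ) × ℝ) →ₗ[ℝ] ((Fin n → ℝ) × ℝ) :=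
  LinearMap.prodMap (rhoR l w) LinearMap.id

theorem rG_apply {n : ℕ} (l w : Fin n → ℤ) (p : (Fin n → ℤ) × ℤ) :
    rG l w p = (rhoZ l w p.1, p.2) := rfl

theorem rV_apply {n : ℕ} (l w : Fin n → ℤ) (p : (Fin n → ℝ) × ℝ) :
    rV l w p = (rhoR l w p.1, p.2) := rfl

theorem rho_proj {n : ℕ} (l w : Fin n → ℤ) (h : ∑ i, l i * w i = 1) :
    Proj (iot n) (rV l w) (rG l w) (w, 0) where
  inj _ _ h := iot_inj h
  comm x := by
    rw [iot_apply, iot_apply, rG_apply, rV_apply, rho_comm]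
  exV p := ⟨∑ i, (l i : ℝ) * p.1 i, by
    rw [rV_apply, iot_apply]
    ext i <;> simp [rhoR]⟩
  exG p := ⟨∑ i, l i * p.1 i, by
    rw [rG_apply]
    ext i <;> simp [rhoZ]⟩
  zero := by
    rw [rG_apply]
    ext i <;> simp [rhoZ, h]

theorem CC_image {n : ℕ} (l w : Fin n → ℤ) (P : Set (Fin n → ℝ)) :
    CC (rhoR l w '' P) = rV l w '' CC P := by
  ext p
  constructor
  · rintro ⟨t, ht, _, ⟨v, hv, rfl⟩, rfl⟩
    exact ⟨_, ⟨t, ht, v, hv, rfl⟩, by simp [rV_apply]⟩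
  · rintro ⟨_, ⟨t, ht, v, hv, rfl⟩, rfl⟩
    exact ⟨t, ht, _, ⟨v, hv, rfl⟩, by simp [rV_apply]⟩

theorem exists_dual {n : ℕ} (w : Fin n → ℤ)
    (hw : ∀ (d : ℤ) (v : Fin n → ℤ), w = d • v → IsUnit d) : ∃ l : Fin n → ℤ, ∑ i, l i * w i = 1 := by
  obtain ⟨g, hg⟩ := (IsPrincipalIdealRing.principal (Ideal.span (Set.range w))).principal
  have h1 : ∀ i, g ∣ w i := by
    intro i
    rw [← Ideal.mem_span_singleton]
    have : w i ∈ Ideal.span (Set.range w) := Ideal.subset_span ⟨i, rfl⟩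
    rw [hg] at this
    exact this
  choose v hv using h1
  have hu := hw g v (by ext i; simp [hv i])
  have h2 : (1 : ℤ) ∈ Ideal.span (Set.range w) := by
    rw [hg]
    have : Ideal.span {g} = ⊤ := Ideal.span_singleton_eq_top.2 hu
    change (1 : ℤ) ∈ Ideal.span {g}
    rw [this]
    trivial
  rw [Ideal.mem_span_range_iff_exists_fun] at h2
  exact h2

def LatPoly {n : ℕ} (P : Set (Fin n → ℝ)) : Prop :=
  ∃ S : Finset (Fin n → ℤ), S.Nonempty ∧ P = convexHull ℝ (toR '' (S : Set (Fin n → ℤ)))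

section steps

variable {n : ℕ} {P : Set (Fin n → ℝ)}

theorem LatPoly.convex (h : LatPoly P) : Convex ℝ P := by
  obtain ⟨S, -, rfl⟩ := h
  exact convex_convexHull _ _

theorem LatPoly.nonempty (h : LatPoly P) : P.Nonempty := by
  obtain ⟨S, ⟨s, hs⟩, rfl⟩ := h
  exact ⟨_, subset_convexHull _ _ ⟨s, hs, rfl⟩⟩

theorem LatPoly.bounded (h : LatPoly P) : Bornology.IsBounded P := by
  obtain ⟨S, -, rfl⟩ := h
  exact (Set.Finite.isCompact_convexHull (𝕜 := ℝ) (S.finite_toSet.image _)).isBounded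

theorem LatPoly.image (h : LatPoly P) (l w : Fin n → ℤ) : LatPoly (rhoR l w '' P) := by
  classical
  obtain ⟨S, hS, rfl⟩ := h
  refine ⟨S.image (rhoZ l w), hS.image _, ?_⟩
  rw [(rhoR l w).image_convexHull, Finset.coe_image, Set.image_image, Set.image_image]
  simp only [rho_comm]

theorem mem_CC_one {v : Fin n → ℤ} : iot n (v, 1) ∈ CC P ↔ toR v ∈ P := by
  rw [iot_apply, Int.cast_one, mem_CC_pos one_pos]
  simp

theorem IsCone.sum {V : Type*} [AddCommGroup V] [Module ℝ V] {C : Set V} (hC : IsCone C)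
    {α : Type*} (s : Finset α) (f : α → V) (hf : ∀ i ∈ s, f i ∈ C) : ∑ i ∈ s, f i ∈ C :=
  Finset.sum_induction f (· ∈ C) (fun _ _ => hC.add) hC.zero hf

/-- Decompose the generator. -/
theorem decomp (hP : LatPoly P) (hic : IntClosed P) (c : ℕ) (y : (Fin n → ℤ) × ℤ) (hy2 : y.2 = c + 2)
    (hy : ∀ x, Inn (CC P) (iot n x) ↔ iot n (x - y) ∈ CC P) :
    ∃ v1 v2 v3 : Fin n → ℤ, Setup (CC P) (iot n) (v1, 1) (v2, 1) (v3, c) := by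
  have hC := CC_cone hP.convex hP.nonempty
  have hyE : y ∈ EP P := by
    rw [mem_EP hP.nonempty]
    exact ((hy y).2 (by rw [sub_self, map_zero]; exact hC.zero)).1
  obtain ⟨f, hf, hs⟩ := hic y hyE (c + 2) (by rw [hy2]; push_cast; ring)
  rw [Fin.sum_univ_succ, Fin.sum_univ_succ] at hs
  refine ⟨f 0, f 1, ∑ j : Fin c, f j.succ.succ, hC, ?_, mem_CC_one.2 (hf 0), mem_CC_one.2 (hf 1), ?_⟩
  · intro x
    rw [hy]
    have : y = (f 0, 1) + (f 1, 1) + (∑ j : Fin c, f j.succ.succ, (c : ℤ)) := by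
      ext1
      · rw [← hs]
        simp [add_assoc]
      · rw [hy2]
        simp
        ring
    rw [this]
  · have : ((∑ j : Fin c, f j.succ.succ, (c : ℤ)) : (Fin n → ℤ) × ℤ)
        = ∑ j : Fin c, (f j.succ.succ, 1) := by
      ext1
      · rw [Prod.fst_sum]
      · rw [Prod.snd_sum]
        simp
    rw [this, map_sum]
    exact hC.sum _ _ fun j _ => mem_CC_one.2 (hf _)

theorem prim {v1 v2 v3 : Fin n → ℤ} {c : ℤ}
    (hs : Setup (CC P) (iot n) (v1, 1) (v2, 1) (v3, c)) :
    ∃ l : Fin n → ℤ, ∑ i, l i * (v1 - v2) i = 1 := by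
  have hne : v1 ≠ v2 := by
    rintro rfl
    have := CC_nonneg (hs.ne rfl)
    simp [iot_apply] at this
    linarith
  apply exists_dual
  intro d v hv
  have hd : (d : ℝ) ≠ 0 := by
    intro h
    have : d = 0 := by exact_mod_cast h
    rw [this, zero_smul, sub_eq_zero] at hv
    exact hne hv
  have hi : iot n (v1, 1) - iot n (v2, 1) = (d : ℝ) • iot n (v, 0) := by
    rw [← map_sub, Int.cast_smul_eq_zsmul, ← map_zsmul]
    congr 1
    ext1
    · simpa using hv
    · simp
  have h0 : iot n (v, 0) + (-(d : ℝ)⁻¹) • (iot n (v1, 1) - iot n (v2, 1)) ∈ CC P := by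
    rw [hi, smul_smul, neg_mul, inv_mul_cancel₀ hd, neg_one_smul, add_neg_cancel]
    exact hs.cone.zero
  obtain ⟨k, hk⟩ := hs.round h0
  have h1 := CC_zero hk (by simp [iot_apply])
  rw [← map_zero (iot n)] at h1
  have h2 := congrArg Prod.fst (iot_inj h1)
  have h3 : v + k • (v1 - v2) = 0 := by simpa using h2
  have h4 : (1 + d * k) • (v1 - v2) = 0 := by
    have : d • (v + k • (v1 - v2)) = 0 := by rw [h3, smul_zero]
    rw [smul_add, ← hv] at this
    rw [add_smul, one_smul, mul_smul]
    exact this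
  rcases smul_eq_zero.1 h4 with h5 | h5
  · exact IsUnit.of_mul_eq_one (-k) (by linarith)
  · exact absurd (sub_eq_zero.1 h5) hne

end steps

section steps2

variable {n : ℕ} {P : Set (Fin n → ℝ)}

theorem pair_sub (v1 v2 : Fin n → ℤ) :
    (((v1, 1) : (Fin n → ℤ) × ℤ) - (v2, 1)) = (v1 - v2, 0) := by
  ext1 <;> simp

theorem intClosed_image (hP : LatPoly P) (hic : IntClosed P) {v1 v2 v3 l : Fin n → ℤ} {c : ℤ}
    (hs : Setup (CC P) (iot n) (v1, 1) (v2, 1) (v3, c))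
    (hl : ∑ i, l i * (v1 - v2) i = 1) : IntClosed (rhoR l (v1 - v2) '' P) := by
  have hpr := rho_proj l (v1 - v2) hl
  rw [← pair_sub] at hpr
  intro p hp m hm
  rw [mem_EP (hP.nonempty.image _), CC_image, hpr.mem_iff hs] at hp
  obtain ⟨e, he, rfl⟩ := hp
  rw [← mem_EP hP.nonempty] at he
  obtain ⟨f, hf, hsum⟩ := hic e he m hm
  refine ⟨fun j => rhoZ l (v1 - v2) (f j), fun j => ?_, ?_⟩
  · rw [rho_comm]
    exact ⟨_, hf j, rfl⟩
  · rw [← map_sum, hsum]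
    rfl

theorem pdim_image {v1 v2 v3 l : Fin n → ℤ} {c : ℤ}
    (hs : Setup (CC P) (iot n) (v1, 1) (v2, 1) (v3, c))
    (hl : ∑ i, l i * (v1 - v2) i = 1) : pdim P = pdim (rhoR l (v1 - v2) '' P) + 1 := by
  have hpr := rho_proj l (v1 - v2) hl
  unfold pdim
  have h1 : (affineSpan ℝ (rhoR l (v1 - v2) '' P)).direction
      = (affineSpan ℝ P).direction.map (rhoR l (v1 - v2)) := by
    have := AffineSubspace.map_span (rhoR l (v1 - v2)).toAffineMap P
    rw [LinearMap.coe_toAffineMap] at this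
    rw [← this, AffineSubspace.map_direction, LinearMap.toAffineMap_linear]
  rw [h1]
  set D := (affineSpan ℝ P).direction
  have h2 := ((rhoR l (v1 - v2)).domRestrict D).finrank_range_add_finrank_ker
  rw [LinearMap.range_domRestrict] at h2
  rw [← h2]
  congr 1
  have hw0 : toR (v1 - v2) ≠ 0 := by
    intro h
    have h3 : v1 - v2 = 0 := by
      ext i
      have : (((v1 - v2) i : ℤ) : ℝ) = 0 := congrFun h i
      exact_mod_cast this
    rw [h3] at hl
    simp at hl
  have hwD : toR (v1 - v2) ∈ D := by
    have : toR (v1 - v2) = toR v1 -ᵥ toR v2 := by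
      ext i
      simp [toR]
    rw [this]
    exact AffineSubspace.vsub_mem_direction (subset_affineSpan _ _ (mem_CC_one.1 hs.h1))
      (subset_affineSpan _ _ (mem_CC_one.1 hs.h2))
  have hwk : rhoR l (v1 - v2) (toR (v1 - v2)) = 0 := by
    have := congrArg Prod.fst hpr.zeroV
    exact this
  refine finrank_eq_one (⟨⟨toR (v1 - v2), hwD⟩, hwk⟩ :
    LinearMap.ker ((rhoR l (v1 - v2)).domRestrict D)) ?_ ?_
  · intro h
    exact hw0 (congrArg (fun x => (x.1.1 : Fin n → ℝ)) h)
  · rintro ⟨⟨u, hu⟩, hk⟩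
    have hk' : rhoR l (v1 - v2) u = 0 := hk
    refine ⟨∑ i, (l i : ℝ) * u i, ?_⟩
    apply Subtype.ext
    apply Subtype.ext
    change (∑ i, (l i : ℝ) * u i) • toR (v1 - v2) = u
    have h4 : u - (∑ i, (l i : ℝ) * u i) • toR (v1 - v2) = 0 := hk'
    exact (sub_eq_zero.1 h4).symm

theorem exists_strip {v1 v2 v3 : Fin n → ℤ} {c : ℤ}
    (hs : Setup (CC P) (iot n) (v1, 1) (v2, 1) (v3, c)) {e : (Fin n → ℤ) × ℤ}
    (he : iot n e ∈ CC P) :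
    ∃ a : ℕ, iot n (e + (-(a : ℤ)) • ((v1, 1) - (v2, 1))) ∈ CC P ∧
      iot n (e + (-(a : ℤ)) • ((v1, 1) - (v2, 1)) - (v1, 1)) ∉ CC P := by
  generalize hy1 : ((v1, 1) : (Fin n → ℤ) × ℤ) = y1 at *
  generalize hy2 : ((v2, 1) : (Fin n → ℤ) × ℤ) = y2 at *
  have hex : ∃ a : ℕ, iot n (e - (a + 1) • y1) ∉ CC P := by
    refine ⟨e.2.toNat, fun h => ?_⟩
    have := CC_nonneg h
    simp only [iot_apply] at this
    have h2 : 0 ≤ (e - (e.2.toNat + 1) • y1).2 := by exact_mod_cast this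
    rw [← hy1] at h2
    simp at h2
  obtain ⟨a, hspec, hu⟩ : ∃ a : ℕ, iot n (e - (a + 1) • y1) ∉ CC P ∧
      iot n (e - a • y1) ∈ CC P := by
    classical
    refine ⟨Nat.find hex, Nat.find_spec hex, ?_⟩
    rcases h : Nat.find hex with _ | b
    · simpa using he
    · have := Nat.find_min hex (m := b) (by omega)
      exact not_not.1 this
  have heq : e + (-(a : ℤ)) • (y1 - y2) = (e - a • y1) + a • y2 := by
    rw [neg_smul, natCast_zsmul, smul_sub]
    abel
  refine ⟨a, ?_, ?_⟩
  · rw [heq, map_add, map_nsmul (iot n) a y2, ← Nat.cast_smul_eq_nsmul ℝ a (iot n y2)]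
    exact hs.cone.add hu (hs.cone.smul (by positivity) hs.h2)
  · intro h
    rw [heq] at h
    apply hspec
    have := hs.strip a hu h
    rwa [sub_sub, ← succ_nsmul] at this

theorem count (hP : LatPoly P) {v1 v2 v3 l : Fin n → ℤ} {c : ℤ}
    (hs : Setup (CC P) (iot n) (v1, 1) (v2, 1) (v3, c))
    (hl : ∑ i, l i * (v1 - v2) i = 1) (m : ℕ) :
    (lev P ((m + 1 : ℕ) : ℤ)).ncard
      = (lev P m).ncard + (lev (rhoR l (v1 - v2) '' P) ((m + 1 : ℕ) : ℤ)).ncard := by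
  have hpr := rho_proj l (v1 - v2) hl
  rw [← pair_sub] at hpr
  set M : ℤ := ((m + 1 : ℕ) : ℤ) with hM
  have hMm : M = m + 1 := by rw [hM]; push_cast; rfl
  set B : Set (Fin n → ℤ) := {x | x ∈ lev P M ∧ x - v1 ∉ lev P m} with hB
  have hfin := lev_finite hP.bounded (m + 1)
  rw [← hM] at hfin
  have hpair : ∀ x : Fin n → ℤ, ((x, M) : (Fin n → ℤ) × ℤ) - (v1, 1) = (x - v1, (m : ℤ)) := by
    intro x
    ext1
    · simp
    · simp [hMm]
  have hsub : (fun x => x + v1) '' lev P m ⊆ lev P M := by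
    rintro _ ⟨x, hx, rfl⟩
    have h1 : ((x + v1, M) : (Fin n → ℤ) × ℤ) = (x, (m : ℤ)) + (v1, 1) := by
      ext1
      · simp
      · simp [hMm]
    change iot n (x + v1, M) ∈ CC P
    rw [h1, map_add]
    exact hs.cone.add hx hs.h1
  have hBeq : B = lev P M \ (fun x => x + v1) '' lev P m := by
    ext x
    constructor
    · rintro ⟨h1, h2⟩
      refine ⟨h1, ?_⟩
      rintro ⟨u, hu, rfl⟩
      apply h2
      simpa using hu
    · rintro ⟨h1, h2⟩
      refine ⟨h1, fun h => h2 ⟨_, h, by simp⟩⟩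
  have hc1 : (lev P M).ncard = B.ncard + (lev P m).ncard := by
    rw [← Set.ncard_image_of_injective (lev P m) (add_left_injective v1), hBeq]
    exact (Set.ncard_sdiff_add_ncard_of_subset hsub hfin).symm
  have himg : rhoZ l (v1 - v2) '' B = lev (rhoR l (v1 - v2) '' P) M := by
    ext q
    constructor
    · rintro ⟨x, hx, rfl⟩
      change iot n (rG l (v1 - v2) (x, M)) ∈ CC (rhoR l (v1 - v2) '' P)
      rw [CC_image, hpr.mem_iff hs]
      exact ⟨_, hx.1, rfl⟩
    · intro hq
      change iot n (q, M) ∈ CC (rhoR l (v1 - v2) '' P) at hq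
      rw [CC_image, hpr.mem_iff hs] at hq
      obtain ⟨e, he, heq⟩ := hq
      obtain ⟨a, h1, h2⟩ := exists_strip hs he
      have he2 : e.2 = M := congrArg Prod.snd heq
      set x := e + (-(a : ℤ)) • (((v1, 1) : (Fin n → ℤ) × ℤ) - (v2, 1)) with hx
      have hx2 : x = (x.1, M) := by
        ext1
        · rfl
        · simp [hx, he2]
      refine ⟨x.1, ⟨?_, ?_⟩, ?_⟩
      · change iot n (x.1, M) ∈ CC P
        rw [← hx2]
        exact h1
      · change iot n (x.1 - v1, (m : ℤ)) ∉ CC P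
        rw [← hpair, ← hx2]
        exact h2
      · have h3 : rG l (v1 - v2) x = (q, M) := by
          rw [hx, map_add, map_zsmul, hpr.zero, smul_zero, add_zero, heq]
        exact congrArg Prod.fst h3
  have hkey : ∀ x ∈ B, ∀ x' ∈ B, ∀ k : ℤ, x' = x + k • (v1 - v2) → ¬ 1 ≤ k := by
    intro x hx x' hx' k hk hk1
    have h1 : ((x', M) : (Fin n → ℤ) × ℤ) = (x, M) + k • ((v1, 1) - (v2, 1)) := by
      rw [pair_sub]
      ext1
      · exact hk
      · simp
    have h2 := hs.uniq hk1 hx.1 (by rw [← h1]; exact hx'.1)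
    rw [← h1, hpair] at h2
    exact hx'.2 h2
  have hinj : Set.InjOn (rhoZ l (v1 - v2)) B := by
    intro x hx x' hx' heq
    have h1 : x - (∑ i, l i * x i) • (v1 - v2) = x' - (∑ i, l i * x' i) • (v1 - v2) := heq
    set k := ∑ i, l i * x i
    set k' := ∑ i, l i * x' i
    have h2 : x' = x + (k' - k) • (v1 - v2) := by
      rw [sub_smul, ← sub_eq_zero]
      rw [← sub_eq_zero] at h1
      rw [← neg_eq_zero, ← h1]
      abel
    have h3 : x = x' + (k - k') • (v1 - v2) := by
      rw [h2, add_assoc, ← add_smul]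
      simp
    have h4 := hkey x hx x' hx' _ h2
    have h5 := hkey x' hx' x hx _ h3
    have h6 : k - k' = 0 := by omega
    rw [h6, zero_smul, add_zero] at h3
    exact h3
  rw [hc1, ← himg, hinj.ncard_image, add_comm]

theorem series_step (f g : ℕ → ℤ) (h0 : g 0 = f 0) (h : ∀ m, f (m + 1) = f m + g (m + 1)) :
    PowerSeries.mk f * (1 - PowerSeries.X) = PowerSeries.mk g := by
  ext m
  rw [mul_sub, mul_one, map_sub]
  rcases m with _ | m
  · simp [h0]
  · rw [PowerSeries.coeff_succ_mul_X]
    simp [h m]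

theorem step (hP : LatPoly P) (hic : IntClosed P) (c : ℕ) (y : (Fin n → ℤ) × ℤ)
    (hy2 : y.2 = c + 2) (hy : ∀ x, Inn (CC P) (iot n x) ↔ iot n (x - y) ∈ CC P) :
    ∃ (Q : Set (Fin n → ℝ)) (y' : (Fin n → ℤ) × ℤ), LatPoly Q ∧ IntClosed Q ∧ y'.2 = c + 1 ∧
      (∀ x, Inn (CC Q) (iot n x) ↔ iot n (x - y') ∈ CC Q) ∧
      ehrSeries P * (1 - PowerSeries.X) = ehrSeries Q ∧ pdim P = pdim Q + 1 := by
  obtain ⟨v1, v2, v3, hs⟩ := decomp hP hic c y hy2 hy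
  obtain ⟨l, hl⟩ := prim hs
  have hpr := rho_proj l (v1 - v2) hl
  rw [← pair_sub] at hpr
  refine ⟨rhoR l (v1 - v2) '' P, rG l (v1 - v2) ((v1, 1) + (v3, (c : ℤ))), hP.image _ _,
    intClosed_image hP hic hs hl, ?_, ?_, ?_, pdim_image hs hl⟩
  · simp [rG_apply, add_comm]
  · intro x
    rw [CC_image]
    exact hpr.gor hs x
  · apply series_step
    · simp [ehr]
    · intro m
      rw [ehr_eq hP.nonempty, ehr_eq hP.nonempty, ehr_eq (hP.image _ _).nonempty]
      exact_mod_cast count hP hs hl m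

theorem reduce (c : ℕ) : ∀ (P : Set (Fin n → ℝ)), LatPoly P → IntClosed P →
    ∀ (y : (Fin n → ℤ) × ℤ), y.2 = c + 1 →
    (∀ x, Inn (CC P) (iot n x) ↔ iot n (x - y) ∈ CC P) →
    ∃ (Q : Set (Fin n → ℝ)) (y' : (Fin n → ℤ) × ℤ), LatPoly Q ∧ IntClosed Q ∧ y'.2 = 1 ∧
      (∀ x, Inn (CC Q) (iot n x) ↔ iot n (x - y') ∈ CC Q) ∧
      ehrSeries P * (1 - PowerSeries.X) ^ (pdim P + 1)
        = ehrSeries Q * (1 - PowerSeries.X) ^ (pdim Q + 1) := by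
  induction c with
  | zero =>
    intro P hP hic y hy2 hy
    exact ⟨P, y, hP, hic, by simpa using hy2, hy, rfl⟩
  | succ c ih =>
    intro P hP hic y hy2 hy
    obtain ⟨Q, y', hQ, hQic, hy2', hy', hser, hdim⟩ :=
      step hP hic c y (by rw [hy2]; push_cast; ring) hy
    obtain ⟨R, y'', hR, hRic, hy2'', hy'', hser'⟩ := ih Q hQ hQic y' hy2' hy'
    refine ⟨R, y'', hR, hRic, hy2'', hy'', ?_⟩
    rw [← hser', ← hser, hdim, pow_succ']
    ring

theorem relint_lev (hP : LatPoly P) {y : (Fin n → ℤ) × ℤ} (hy2 : y.2 = 1)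
    (hy : ∀ x, Inn (CC P) (iot n x) ↔ iot n (x - y) ∈ CC P) (m : ℕ) :
    {z : Fin n → ℤ | (fun i => (z i : ℝ) / ((m + 1 : ℕ) : ℝ)) ∈ intrinsicInterior ℝ P}
      = (fun x => x + y.1) '' lev P m := by
  ext z
  have hpair : ((z, ((m + 1 : ℕ) : ℤ)) : (Fin n → ℤ) × ℤ) - y = (z - y.1, (m : ℤ)) := by
    ext1
    · simp
    · simp [hy2]
  have h1 : z ∈ {z : Fin n → ℤ | (fun i => (z i : ℝ) / ((m + 1 : ℕ) : ℝ)) ∈ intrinsicInterior ℝ P}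
      ↔ z - y.1 ∈ lev P m := by
    rw [Set.mem_ofPred_eq, div_eq_smul, ← inn_iff hP.convex hP.nonempty _ (by positivity)]
    have h2 := hy (z, ((m + 1 : ℕ) : ℤ))
    rw [hpair] at h2
    exact h2
  rw [h1]
  constructor
  · intro h
    exact ⟨_, h, by simp⟩
  · rintro ⟨x, hx, rfl⟩
    simpa using hx

end steps2
/-- if `P` is an integrally closed integral polytope with `K[P]`
Gorenstein, then there is an integrally closed integral polytope `Q` with `K[Q]`
Gorenstein whose relative interior contains exactly one lattice point and whose Ehrhart
`h`-vector coincides with that of `P`: the numerator polynomials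
`E_P(t)(1-t)^{dim P + 1} = E_Q(t)(1-t)^{dim Q + 1}` agree; moreover
`h(Q) = h(∂Q)`. -/
theorem gorenstein_polytope_reduction
    (n : ℕ) (S : Finset (Fin n → ℤ)) (hS : S.Nonempty)
    (P : Set (Fin n → ℝ)) (hP : P = convexHull ℝ (toR '' (S : Set (Fin n → ℤ))))
    (hic : IntClosed P) (hgor : GorensteinP P) :
    ∃ (n' : ℕ) (S' : Finset (Fin n' → ℤ)) (Q : Set (Fin n' → ℝ)),
      S'.Nonempty ∧
      Q = convexHull ℝ (toR '' (S' : Set (Fin n' → ℤ))) ∧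
      IntClosed Q ∧
      GorensteinP Q ∧
      Set.ncard {z : Fin n' → ℤ | toR z ∈ intrinsicInterior ℝ Q} = 1 ∧
      ehrSeries P * (1 - PowerSeries.X) ^ (pdim P + 1)
        = ehrSeries Q * (1 - PowerSeries.X) ^ (pdim Q + 1) ∧
      PowerSeries.mk (fun m => ehr Q m - ehrInt Q m) * (1 - PowerSeries.X) ^ (pdim Q)
        = ehrSeries Q * (1 - PowerSeries.X) ^ (pdim Q + 1) := by
  have hLP : LatPoly P := ⟨S, hS, hP⟩
  obtain ⟨y, hy, hgor⟩ := hgor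
  have hpos : 0 < y.2 := hy.1
  have hg := (gor_iff hLP.convex hLP.nonempty y).1 ⟨hy, hgor⟩
  obtain ⟨c, hc⟩ : ∃ c : ℕ, y.2 = c + 1 := ⟨(y.2 - 1).toNat, by omega⟩
  obtain ⟨Q, y', hQ, hQic, hy2, hy', hser⟩ := reduce c P hLP hic y hc hg
  have hne := hQ.nonempty
  have hG := (gor_iff hQ.convex hne y').2 hy'
  obtain ⟨S', hS', hQS⟩ := hQ
  have hQ : LatPoly Q := ⟨S', hS', hQS⟩
  refine ⟨n, S', Q, hS', hQS, hQic, ⟨y', hG.1, hG.2⟩, ?_, hser, ?_⟩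
  · have h1 := relint_lev hQ hy2 hy' 0
    have h2 : {z : Fin n → ℤ | toR z ∈ intrinsicInterior ℝ Q} = {y'.1} := by
      have h3 : ∀ z : Fin n → ℤ, (fun i => (z i : ℝ) / ((0 + 1 : ℕ) : ℝ)) = toR z := by
        intro z
        ext i
        simp [toR]
      simp only [h3] at h1
      rw [h1, Nat.cast_zero, lev_zero hne]
      simp
    rw [h2, Set.ncard_singleton]
  · have h1 : ehrSeries Q * (1 - PowerSeries.X)
        = PowerSeries.mk (fun m => ehr Q m - ehrInt Q m) := by
      apply series_step
      · simp [ehrInt]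
      · intro m
        have h2 : ehrInt Q (m + 1) = ehr Q m := by
          rw [ehr_eq hne]
          unfold ehrInt
          rw [if_neg (Nat.succ_ne_zero m), relint_lev hQ hy2 hy' m,
            Set.ncard_image_of_injective _ (add_left_injective y'.1)]
        rw [h2]
        ring
    rw [← h1, pow_succ']
    ring

end
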